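/- arXiv:1802.03448 — 2 statements merged into one kernel-verified Lean document; each statement's English description precedes it below -/
import Mathlib

section
/- Let (G, ⋆, ∘) be a finite skew left brace and let G' be a ∘-stable subgroup of (G, ⋆), i.e., a subgroup of (G, ⋆) such that (g ∘ g') ⋆ g⁻¹ ∈ G' for all g in G and g' in G'. Then G' is also a subgroup of (G, ∘), hence is a sub-skew left brace of G. -/
/-- Let `(G, ⋆, ∘)` be a finite skew left brace and `G'` a `∘`-stable
subgroup of `(G, ⋆)`, i.e. `(g ∘ g') ⋆ g⁻¹ ∈ G'` for all `g ∈ G`, `g' ∈ G'`.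
Then `G'` is also a subgroup of `(G, ∘)` (it contains the `∘`-identity and is closed
under `∘` and `∘`-inverses), hence is a sub-skew left brace of `G`. -/
theorem circ_stable_subgroup_is_circ_subgroup {G : Type*} [Group G] [Finite G]
    (circ : G → G → G) (cinv : G → G) (ce : G)
    (cassoc : ∀ a b c : G, circ (circ a b) c = circ a (circ b c))
    (cid_left : ∀ a : G, circ ce a = a)
    (cid_right : ∀ a : G, circ a ce = a)
    (cinv_left : ∀ a : G, circ (cinv a) a = ce)
    (cinv_right : ∀ a : G, circ a (cinv a) = ce)
    (brace : ∀ g h k : G, circ g (h * k) = circ g h * g⁻¹ * circ g k)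
    (G' : Subgroup G)
    (hstable : ∀ g : G, ∀ g' ∈ G', circ g g' * g⁻¹ ∈ G') :
    ce ∈ G' ∧ (∀ x ∈ G', ∀ y ∈ G', circ x y ∈ G') ∧ (∀ x ∈ G', cinv x ∈ G') := by
  have circ_one (g : G) : circ g 1 = g := by
    have h := brace g 1 1
    rw [mul_one, mul_assoc, left_eq_mul, inv_mul_eq_one] at h
    exact h.symm
  have ce_eq : ce = 1 := (circ_one ce).symm.trans (cid_left 1)
  refine ⟨ce_eq ▸ G'.one_mem, fun x hx y hy => ?_, fun x hx => ?_⟩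
  · simpa using G'.mul_mem (hstable x y hy) hx
  · simpa [cinv_left, ce_eq] using hstable (cinv x) x hx
end

section
/- Let G be a finite group with complementary subgroups H and J (|H||J| = |G|, H ∩ J = {e}), so every g ∈ G factors uniquely as g = g_l·g_r with g_l ∈ H, g_r ∈ J. Define g ∘ h = g_l · h · g_r for g = g_l g_r. Then (G, ·, ∘) is a skew left brace with additive group (G, ·), and (G, ∘) is isomorphic to H × J. -/
/-- Let `G` be a finite group with complementary subgroups `H`, `J`
(`|H|·|J| = |G|`, `H ∩ J = {e}`), so every `g ∈ G` factors uniquely as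
`g = l g * r g` with `l g ∈ H`, `r g ∈ J`. Define `g ∘ h = l g * h * r g`.
Then `(G, ·, ∘)` is a skew left brace with additive group `(G, ·)` — i.e. the skew
brace identity holds and `(G, ∘)` is a group — and `(G, ∘)` is isomorphic to
`H × J`. -/
theorem exact_factorization_skew_brace {G : Type*} [Group G] [Finite G]
    (H J : Subgroup G)
    (hcard : Nat.card H * Nat.card J = Nat.card G)
    (hint : H ⊓ J = ⊥)
    (l r : G → G) (hl : ∀ g, l g ∈ H) (hr : ∀ g, r g ∈ J)
    (hfac : ∀ g, g = l g * r g) :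
    (∀ g h k : G, l g * (h * k) * r g =
      (l g * h * r g) * g⁻¹ * (l g * k * r g)) ∧
    (∃ e : G ≃ H × J, ∀ g h : G, e (l g * h * r g) = e g * e h) := by
  have huniq : ∀ g : G, ∀ a ∈ H, ∀ b ∈ J, g = a * b → l g = a ∧ r g = b := by
    intro g a ha b hb hg
    have hinj := Subgroup.mul_injective_of_disjoint (disjoint_iff.mpr hint)
    have hpair : ((⟨l g, hl g⟩, ⟨r g, hr g⟩) : H × J) = (⟨a, ha⟩, ⟨b, hb⟩) :=
      hinj ((hfac g).symm.trans hg)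
    simpa using hpair
  refine ⟨fun g h k => ?_, ⟨fun g => (⟨l g, hl g⟩, ⟨r g, hr g⟩⁻¹),
    fun p => p.1 * (p.2 : G)⁻¹, fun g => ?_, fun p => ?_⟩, fun g h => ?_⟩
  · have hg : g⁻¹ = (r g)⁻¹ * (l g)⁻¹ := by rw [← mul_inv_rev, ← hfac g]
    rw [hg]
    group
  · simpa using (hfac g).symm
  · obtain ⟨h₁, h₂⟩ := huniq _ p.1 p.1.2 _ (J.inv_mem p.2.2) rfl
    ext
    · exact h₁
    · simp [h₂]
  · have hgh : l g * h * r g = (l g * l h) * (r h * r g) := by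
      conv_lhs => rw [hfac h]
      group
    obtain ⟨h₁, h₂⟩ := huniq _ _ (H.mul_mem (hl g) (hl h)) _ (J.mul_mem (hr h) (hr g)) hgh
    ext
    · exact h₁
    · simp [h₂]
end
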